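/- For every symmetric bilinear form h on ℝ⁷ one has j_φ(i_φ(h)) = 8h + 4·tr(h)·⟨·,·⟩; that is, for all v, w ∈ ℝ⁷, j_φ(i_φ(h))(v,w) = 8 h(v,w) + 4 (Σ_{i=1}^{7} h(e_i,e_i)) ⟨v,w⟩. -/

import Mathlib

open scoped BigOperators Matrix

noncomputable section

namespace G2

/-- The standard basis vector `e i` of `ℝ⁷`. -/
def e (i : Fin 7) : Fin 7 → ℝ := fun j => if j = i then 1 else 0

/-- The 3-form `e^a ∧ e^b ∧ e^c` (determinant convention), evaluated on `(x, y, z)`. -/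
def w3 (a b c : Fin 7) (x y z : Fin 7 → ℝ) : ℝ :=
  x a * (y b * z c - y c * z b) - x b * (y a * z c - y c * z a)
    + x c * (y a * z b - y b * z a)

/-- The 4-form `e^a ∧ e^b ∧ e^c ∧ e^d`, evaluated on `(x, y, z, w)`. -/
def w4 (a b c d : Fin 7) (x y z w : Fin 7 → ℝ) : ℝ :=
  Matrix.det !![x a, x b, x c, x d; y a, y b, y c, y d;
                z a, z b, z c, z d; w a, w b, w c, w d]

/-- The fundamental `G₂` 3-form
`φ = e^{123}+e^{145}+e^{167}+e^{246}-e^{257}-e^{347}-e^{356}` (indices shifted to start at 0),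
as a trilinear alternating function of three vectors. -/
def phi (x y z : Fin 7 → ℝ) : ℝ :=
  w3 0 1 2 x y z + w3 0 3 4 x y z + w3 0 5 6 x y z + w3 1 3 5 x y z
    - w3 1 4 6 x y z - w3 2 3 6 x y z - w3 2 4 5 x y z

/-- The 4-form `ψ = *φ = e^{4567}+e^{2367}+e^{2345}+e^{1357}-e^{1346}-e^{1256}-e^{1247}`
(indices shifted to start at 0), as a function of four vectors. -/
def psi (x y z w : Fin 7 → ℝ) : ℝ :=
  w4 3 4 5 6 x y z w + w4 1 2 5 6 x y z w + w4 1 2 3 4 x y z w + w4 0 2 4 6 x y z w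
    - w4 0 2 3 5 x y z w - w4 0 1 4 5 x y z w - w4 0 1 3 6 x y z w

/-- `ε_{ijk} = φ(e_i, e_j, e_k)`. -/
def eps (i j k : Fin 7) : ℝ := phi (e i) (e j) (e k)

/-- `ε_{ijkl} = ψ(e_i, e_j, e_k, e_l)`. -/
def eps4 (i j k l : Fin 7) : ℝ := psi (e i) (e j) (e k) (e l)

/-- The volume form `e^1 ∧ ⋯ ∧ e^7`, evaluated on a 7-tuple of vectors. -/
def vol (v : Fin 7 → (Fin 7 → ℝ)) : ℝ := Matrix.det (Matrix.of fun i j => v i j)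

/-- The matrix `[v]` with `[v]_{ij} = Σ_k ε_{ijk} v_k`. -/
def bracket (v : Fin 7 → ℝ) : Matrix (Fin 7) (Fin 7) ℝ :=
  Matrix.of fun i j => ∑ k : Fin 7, eps i j k * v k

/-- The vector `⟨A⟩` with `⟨A⟩_i = Σ_{j,k} ε_{ijk} A_{jk}`. -/
def angle (A : Matrix (Fin 7) (Fin 7) ℝ) : Fin 7 → ℝ :=
  fun i => ∑ j : Fin 7, ∑ k : Fin 7, eps i j k * A j k

/-- Wedge product of two 2-forms (determinant convention), evaluated on four vectors. -/
def wedge22 (A B : (Fin 7 → ℝ) → (Fin 7 → ℝ) → ℝ) (v : Fin 4 → (Fin 7 → ℝ)) : ℝ :=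
  (1 / 4 : ℝ) * ∑ σ : Equiv.Perm (Fin 4),
    ((Equiv.Perm.sign σ : ℤ) : ℝ) * (A (v (σ 0)) (v (σ 1)) * B (v (σ 2)) (v (σ 3)))

/-- Wedge product of three 2-forms (determinant convention), evaluated on six vectors. -/
def wedge222 (A B C : (Fin 7 → ℝ) → (Fin 7 → ℝ) → ℝ) (v : Fin 6 → (Fin 7 → ℝ)) : ℝ :=
  (1 / 8 : ℝ) * ∑ σ : Equiv.Perm (Fin 6),
    ((Equiv.Perm.sign σ : ℤ) : ℝ) *
      (A (v (σ 0)) (v (σ 1)) * B (v (σ 2)) (v (σ 3)) * C (v (σ 4)) (v (σ 5)))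

/-- Wedge product of two 2-forms and a 3-form (determinant convention),
evaluated on seven vectors. -/
def wedge223 (A B : (Fin 7 → ℝ) → (Fin 7 → ℝ) → ℝ)
    (C : (Fin 7 → ℝ) → (Fin 7 → ℝ) → (Fin 7 → ℝ) → ℝ)
    (v : Fin 7 → (Fin 7 → ℝ)) : ℝ :=
  (1 / 24 : ℝ) * ∑ σ : Equiv.Perm (Fin 7),
    ((Equiv.Perm.sign σ : ℤ) : ℝ) *
      (A (v (σ 0)) (v (σ 1)) * B (v (σ 2)) (v (σ 3)) * C (v (σ 4)) (v (σ 5)) (v (σ 6)))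

/-- The map `i_φ : S²(ℝ⁷)* → Λ³(ℝ⁷)*`,
`i_φ(h) = Σ_{i,j,k,l} ε_{ikl} h_{ij} e^j ∧ e^k ∧ e^l`, evaluated on `(x, y, z)`. -/
def iphi (h : Fin 7 → Fin 7 → ℝ) (x y z : Fin 7 → ℝ) : ℝ :=
  ∑ i : Fin 7, ∑ j : Fin 7, ∑ k : Fin 7, ∑ l : Fin 7, eps i k l * h i j * w3 j k l x y z

def alt (n : ℕ) (G : (Fin n → Fin 7) → ℝ) (v : Fin n → Fin 7) : ℝ :=
  ∑ σ : Equiv.Perm (Fin n), ((Equiv.Perm.sign σ : ℤ) : ℝ) * G (fun i => v (σ i))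

theorem alt_succ (n : ℕ) (G : (Fin (n + 1) → Fin 7) → ℝ) (v : Fin (n + 1) → Fin 7) :
    alt (n + 1) G v = ∑ p : Fin (n + 1), (if p = 0 then 1 else -1) *
      alt n (fun u => G (Fin.cons (v p) u)) (fun i => v (Equiv.swap 0 p i.succ)) := by
  unfold alt
  rw [Finset.univ_perm_fin_succ, ← Finset.univ_product_univ]
  simp only [Finset.sum_map, Equiv.toEmbedding_apply, Finset.sum_product]
  refine Finset.sum_congr rfl fun p _ => ?_
  rw [Finset.mul_sum]
  refine Finset.sum_congr rfl fun τ _ => ?_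
  rw [Equiv.Perm.decomposeFin.symm_sign, ← mul_assoc]
  congr 1
  · split_ifs <;> simp
  · congr 1
    funext i
    refine Fin.cases ?_ (fun i => ?_) i
    · simp
    · simp

theorem alt_zero (G : (Fin 0 → Fin 7) → ℝ) (v : Fin 0 → Fin 7) :
    alt 0 G v = G ![] := by
  have : (fun i => v i) = ![] := Subsingleton.elim _ _
  simp [alt, this]

theorem alt3 (k : ℝ) (C : Fin 7 → Fin 7 → Fin 7 → ℝ)
    (h1 : ∀ a b c, C a b c = C b c a) (h2 : ∀ a b c, C b a c = - C a b c) (v : Fin 3 → Fin 7) :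
    alt 3 (fun u => k * C (u 0) (u 1) (u 2)) v = 6 * (k * C (v 0) (v 1) (v 2)) := by
  have e1 : ∀ a b c, C a c b = - C a b c := fun a b c => by rw [h1, h2, ← h1 a b c]
  have e3 : ∀ a b c, C c a b = C a b c := fun a b c => h1 _ _ _
  have e4 : ∀ a b c, C b c a = C a b c := fun a b c => (h1 _ _ _).symm
  have e5 : ∀ a b c, C c b a = - C a b c := fun a b c => by rw [h1, h2]
  simp [alt_succ, alt_zero, Fin.sum_univ_succ, Equiv.swap_apply_def]
  rw [e1 (v 0) (v 1) (v 2), e3 (v 0) (v 1) (v 2), e4 (v 0) (v 1) (v 2), e5 (v 0) (v 1) (v 2),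
    h2 (v 0) (v 1) (v 2)]
  ring

def D5 (B : Fin 7 → Fin 7 → ℝ) (C : Fin 7 → Fin 7 → Fin 7 → ℝ) (a b c d e : Fin 7) : ℝ :=
  B a b * C c d e - B a c * C b d e + B a d * C b c e - B a e * C b c d + B b c * C a d e - B b d * C a c e + B b e * C a c d + B c d * C a b e - B c e * C a b d + B d e * C a b c

theorem alt5 (k : ℝ) (B : Fin 7 → Fin 7 → ℝ) (C : Fin 7 → Fin 7 → Fin 7 → ℝ)
    (hB : ∀ a b, B a b = - B b a)
    (h1 : ∀ a b c, C a b c = C b c a) (h2 : ∀ a b c, C b a c = - C a b c) (v : Fin 5 → Fin 7) :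
    alt 5 (fun u => k * (B (u 0) (u 1) * C (u 2) (u 3) (u 4))) v
      = 12 * (k * D5 B C (v 0) (v 1) (v 2) (v 3) (v 4)) := by
  have e1 : ∀ a b c, C a c b = - C a b c := fun a b c => by rw [h1, h2, ← h1 a b c]
  have e3 : ∀ a b c, C c a b = C a b c := fun a b c => h1 _ _ _
  have e4 : ∀ a b c, C b c a = C a b c := fun a b c => (h1 _ _ _).symm
  have e5 : ∀ a b c, C c b a = - C a b c := fun a b c => by rw [h1, h2]
  have key : ∀ (a b : Fin 7) (w : Fin 3 → Fin 7),
      alt 3 (fun u => k * (B a b * C (u 0) (u 1) (u 2))) w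
        = 6 * (k * B a b * C (w 0) (w 1) (w 2)) := by
    intro a b w
    rw [← alt3 (k * B a b) C h1 h2]
    simp only [mul_assoc]
  have step : alt 5 (fun u => k * (B (u 0) (u 1) * C (u 2) (u 3) (u 4))) v
      = ∑ p : Fin 5, ∑ q : Fin 4, (if p = 0 then 1 else -1) * ((if q = 0 then 1 else -1) *
        (6 * (k * B (v p) (v (Equiv.swap 0 p q.succ)) *
          C (v (Equiv.swap 0 p (Equiv.swap 0 q 1).succ))
           (v (Equiv.swap 0 p (Equiv.swap 0 q 2).succ))
           (v (Equiv.swap 0 p (Equiv.swap 0 q 3).succ))))) := by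
    rw [alt_succ]
    refine Finset.sum_congr rfl fun p _ => ?_
    rw [alt_succ, Finset.mul_sum]
    refine Finset.sum_congr rfl fun q _ => ?_
    congr 2
    exact key _ _ _
  rw [step]
  simp [Fin.sum_univ_succ, Equiv.swap_apply_def, D5]
  rw [hB (v 1) (v 0), hB (v 2) (v 0), hB (v 3) (v 0), hB (v 4) (v 0), hB (v 2) (v 1), 
    hB (v 3) (v 1), hB (v 4) (v 1), hB (v 3) (v 2), hB (v 4) (v 2), hB (v 4) (v 3),
    e4 (v 1) (v 2) (v 3), h2 (v 1) (v 2) (v 4), h2 (v 0) (v 2) (v 4), e4 (v 0) (v 2) (v 3), e1 (v 0) (v 1) (v 3), 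
    h2 (v 0) (v 1) (v 4), e3 (v 0) (v 1) (v 2), e4 (v 0) (v 1) (v 3), e5 (v 0) (v 1) (v 2)]
  ring

theorem alt7 (A B : Fin 7 → Fin 7 → ℝ) (C : Fin 7 → Fin 7 → Fin 7 → ℝ)
    (hB : ∀ a b, B a b = - B b a)
    (h1 : ∀ a b c, C a b c = C b c a) (h2 : ∀ a b c, C b a c = - C a b c) :
    alt 7 (fun u => A (u 0) (u 1) * (B (u 2) (u 3) * C (u 4) (u 5) (u 6))) (fun i => i)
      = ∑ p : Fin 7, ∑ q : Fin 6, (if p = 0 then 1 else -1) * ((if q = 0 then 1 else -1) *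
        (12 * (A p (Equiv.swap 0 p q.succ) * D5 B C
          (Equiv.swap 0 p (Equiv.swap 0 q 1).succ)
          (Equiv.swap 0 p (Equiv.swap 0 q 2).succ)
          (Equiv.swap 0 p (Equiv.swap 0 q 3).succ)
          (Equiv.swap 0 p (Equiv.swap 0 q 4).succ)
          (Equiv.swap 0 p (Equiv.swap 0 q 5).succ)))) := by
  have key : ∀ (a b : Fin 7) (w : Fin 5 → Fin 7),
      alt 5 (fun u => A a b * (B (u 0) (u 1) * C (u 2) (u 3) (u 4))) w
        = 12 * (A a b * D5 B C (w 0) (w 1) (w 2) (w 3) (w 4)) :=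
    fun a b w => alt5 (A a b) B C hB h1 h2 w
  rw [alt_succ]
  refine Finset.sum_congr rfl fun p _ => ?_
  rw [alt_succ, Finset.mul_sum]
  refine Finset.sum_congr rfl fun q _ => ?_
  congr 2
  exact key _ _ _

def sg : Fin 7 → Fin 7 → ℝ :=
  ![![0, 1, -1, 1, -1, 1, -1],
    ![-1, 0, 1, 1, -1, -1, 1],
    ![1, -1, 0, -1, -1, 1, 1],
    ![-1, -1, 1, 0, 1, 1, -1],
    ![1, 1, 1, -1, 0, -1, -1],
    ![-1, 1, -1, -1, 1, 0, 1],
    ![1, -1, -1, 1, 1, -1, 0]]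

def mm : Fin 7 → Fin 7 → Fin 7 :=
  ![![0, 2, 1, 4, 3, 6, 5],
    ![2, 0, 0, 5, 6, 3, 4],
    ![1, 0, 0, 6, 5, 4, 3],
    ![4, 5, 6, 0, 0, 1, 2],
    ![3, 6, 5, 0, 0, 2, 1],
    ![6, 3, 4, 1, 2, 0, 0],
    ![5, 4, 3, 2, 1, 0, 0]]

theorem sg_anti (a b : Fin 7) : sg a b = - sg b a := by
  fin_cases a <;> fin_cases b <;> simp [sg]

theorem mm_symm (a b : Fin 7) : mm a b = mm b a := by
  revert a b; decide

theorem phi_e (v : Fin 7 → ℝ) (a b : Fin 7) : phi v (e a) (e b) = sg a b * v (mm a b) := by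
  fin_cases a <;> fin_cases b <;> simp [phi, w3, e, sg, mm]

theorem eps_anti (i a b : Fin 7) : eps i a b = - eps i b a := by
  rw [eps, eps, phi_e, phi_e, sg_anti a b, mm_symm a b]; ring

theorem sum_eps (f : Fin 7 → ℝ) (a b : Fin 7) :
    ∑ i, eps i a b * f i = sg a b * f (mm a b) := by
  simp [eps, phi_e, e]

def CC (h : Fin 7 → Fin 7 → ℝ) (a b c : Fin 7) : ℝ :=
  2 * (sg b c * h (mm b c) a + sg c a * h (mm c a) b + sg a b * h (mm a b) c)

theorem iphi_e (h : Fin 7 → Fin 7 → ℝ) (a b c : Fin 7) :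
    iphi h (e a) (e b) (e c) = CC h a b c := by
  have : ∀ i : Fin 7, ∑ j : Fin 7, ∑ k : Fin 7, ∑ l : Fin 7,
      eps i k l * h i j * w3 j k l (e a) (e b) (e c)
      = 2 * (eps i b c * h i a + eps i c a * h i b + eps i a b * h i c) := by
    intro i
    simp only [w3, e, mul_add, mul_sub, Finset.sum_add_distrib, Finset.sum_sub_distrib]
    simp
    rw [eps_anti i c b, eps_anti i a c, eps_anti i b a]
    ring
  simp only [iphi, this, ← Finset.mul_sum, Finset.sum_add_distrib]
  rw [sum_eps (fun i => h i a), sum_eps (fun i => h i b), sum_eps (fun i => h i c)]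
  rfl

theorem CC1 (h : Fin 7 → Fin 7 → ℝ) (a b c : Fin 7) : CC h a b c = CC h b c a := by
  simp only [CC]; ring

theorem CC2 (h : Fin 7 → Fin 7 → ℝ) (a b c : Fin 7) : CC h b a c = - CC h a b c := by
  simp only [CC]
  rw [sg_anti b a, sg_anti a c, sg_anti c b, mm_symm b a, mm_symm a c, mm_symm c b]; ring


def MM (A B : (Fin 7 → ℝ) →ₗ[ℝ] (Fin 7 → ℝ) →ₗ[ℝ] ℝ)
    (C : (Fin 7 → ℝ) →ₗ[ℝ] (Fin 7 → ℝ) →ₗ[ℝ] (Fin 7 → ℝ) →ₗ[ℝ] ℝ) :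
    MultilinearMap ℝ (fun _ : Fin 7 => (Fin 7 → ℝ)) ℝ :=
  MultilinearMap.mk' (fun v => A (v 0) (v 1) * B (v 2) (v 3) * C (v 4) (v 5) (v 6))
    (by intro v i x y; fin_cases i <;> simp [Function.update] <;> ring)
    (by intro v i c x; fin_cases i <;> simp [Function.update] <;> ring)

def phiL (v : Fin 7 → ℝ) : (Fin 7 → ℝ) →ₗ[ℝ] (Fin 7 → ℝ) →ₗ[ℝ] ℝ :=
  LinearMap.mk₂ ℝ (fun x y => phi v x y)
    (by intro x y z; simp [phi, w3]; ring) (by intro c x y; simp [phi, w3]; ring)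
    (by intro x y z; simp [phi, w3]; ring) (by intro c x y; simp [phi, w3]; ring)

def w3L (a b c : Fin 7) : (Fin 7 → ℝ) →ₗ[ℝ] (Fin 7 → ℝ) →ₗ[ℝ] (Fin 7 → ℝ) →ₗ[ℝ] ℝ :=
  LinearMap.mk₂ ℝ (fun x y =>
    { toFun := fun z => w3 a b c x y z
      map_add' := by intro z z'; simp [w3]; ring
      map_smul' := by intro r z; simp [w3]; ring })
    (by intro x y z; ext; simp [w3]; ring) (by intro r x y; ext; simp [w3]; ring)
    (by intro x y z; ext; simp [w3]; ring) (by intro r x y; ext; simp [w3]; ring)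

def iphiL (h : Fin 7 → Fin 7 → ℝ) :
    (Fin 7 → ℝ) →ₗ[ℝ] (Fin 7 → ℝ) →ₗ[ℝ] (Fin 7 → ℝ) →ₗ[ℝ] ℝ :=
  ∑ i : Fin 7, ∑ j : Fin 7, ∑ k : Fin 7, ∑ l : Fin 7, (eps i k l * h i j) • w3L j k l

theorem iphiL_apply (h : Fin 7 → Fin 7 → ℝ) (x y z : Fin 7 → ℝ) :
    iphiL h x y z = iphi h x y z := by
  simp only [iphiL, iphi, LinearMap.sum_apply, LinearMap.smul_apply, smul_eq_mul]
  rfl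

theorem alt_vol (f : (Fin 7 → ℝ) [⋀^Fin 7]→ₗ[ℝ] ℝ) (vs : Fin 7 → (Fin 7 → ℝ)) :
    f vs = f e * vol vs := by
  have hb : (⇑(Pi.basisFun ℝ (Fin 7)) : Fin 7 → Fin 7 → ℝ) = e := by
    funext i j
    simp [e, Pi.single_apply]
  have := f.eq_smul_basis_det (Pi.basisFun ℝ (Fin 7))
  rw [hb] at this
  have h2 := congrArg (fun f => f vs) this
  simp only [AlternatingMap.smul_apply, Pi.basisFun_det_apply, smul_eq_mul] at h2
  exact h2

theorem wedge_eq (h : Fin 7 → Fin 7 → ℝ) (v w : Fin 7 → ℝ) (vs : Fin 7 → (Fin 7 → ℝ)) :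
    wedge223 (fun x y => phi v x y) (fun x y => phi w x y) (iphi h) vs
      = wedge223 (fun x y => phi v x y) (fun x y => phi w x y) (iphi h) e * vol vs := by
  have key : ∀ us : Fin 7 → (Fin 7 → ℝ),
      wedge223 (fun x y => phi v x y) (fun x y => phi w x y) (iphi h) us
      = (1 / 24 : ℝ) * MultilinearMap.alternatization (MM (phiL v) (phiL w) (iphiL h)) us := by
    intro us
    rw [MultilinearMap.alternatization_apply, wedge223]
    congr 1
    refine Finset.sum_congr rfl fun σ _ => ?_
    rw [Units.smul_def, zsmul_eq_mul]
    congr 1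
  rw [key, key, alt_vol, mul_assoc]


set_option maxHeartbeats 4000000 in
theorem final (h : Fin 7 → Fin 7 → ℝ) (hsym : ∀ i j : Fin 7, h i j = h j i)
    (v w : Fin 7 → ℝ) :
    alt 7 (fun u => (sg (u 0) (u 1) * v (mm (u 0) (u 1))) * ((sg (u 2) (u 3) * w (mm (u 2) (u 3))) *
      CC h (u 4) (u 5) (u 6))) (fun i => i) = 24 * (8 * (∑ i : Fin 7, ∑ j : Fin 7, h i j * v i * w j)
          + 4 * (∑ i : Fin 7, h i i) * (∑ i : Fin 7, v i * w i)) := by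
  have hB : ∀ a b, (fun a b => sg a b * w (mm a b)) a b = - (fun a b => sg a b * w (mm a b)) b a := by
    intro a b
    simp only
    rw [sg_anti a b, mm_symm a b]; ring
  rw [alt7 (fun a b => sg a b * v (mm a b)) (fun a b => sg a b * w (mm a b)) (CC h) hB
    (CC1 h) (CC2 h)]
  simp only [Fin.sum_univ_succ, Equiv.swap_apply_def]
  simp
  simp only [D5, CC]
  simp [sg, mm]
  simp only [hsym 1 0, hsym 2 0, hsym 3 0, hsym 4 0, hsym 5 0, hsym 6 0, hsym 2 1, hsym 3 1, hsym 4 1, hsym 5 1, hsym 6 1, hsym 3 2, hsym 4 2, hsym 5 2, hsym 6 2, hsym 4 3, hsym 5 3, hsym 6 3, hsym 5 4, hsym 6 4, hsym 6 5]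
  ring
/-- `j_φ(i_φ(h)) = 8h + 4·tr(h)·⟨·,·⟩`.  Here `j_φ(γ)(v,w)` is defined as the
unique real number `c` with `(v⌟φ) ∧ (w⌟φ) ∧ γ = c·vol`, so the statement asserts that
`(v⌟φ) ∧ (w⌟φ) ∧ i_φ(h) = (8 h(v,w) + 4 tr(h) ⟨v,w⟩)·vol` as 7-forms. -/
theorem jphi_iphi (h : Fin 7 → Fin 7 → ℝ) (hsym : ∀ i j : Fin 7, h i j = h j i)
    (v w : Fin 7 → ℝ) (vs : Fin 7 → (Fin 7 → ℝ)) :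
    wedge223 (fun x y => phi v x y) (fun x y => phi w x y) (iphi h) vs
      = (8 * (∑ i : Fin 7, ∑ j : Fin 7, h i j * v i * w j)
          + 4 * (∑ i : Fin 7, h i i) * (∑ i : Fin 7, v i * w i)) * vol vs := by
  rw [wedge_eq]
  congr 1
  have := final h hsym v w
  rw [wedge223]
  simp only [phi_e, iphi_e]
  simp only [alt] at this
  simp only [mul_assoc] at this ⊢
  rw [this]
  ring

end G2

end
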